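/- (Pólya factorization) Let f_1, …, f_n : (a,b) → ℝ be n times continuously differentiable functions and, for k = 1,…,n, let W_k(t) denote the Wronskian determinant of f_1,…,f_k, i.e. the determinant of the k×k matrix whose (i,j) entry is f_j^{(i−1)}(t); set W_0 ≡ 1. Assume W_k(t) ≠ 0 for every k = 1,…,n and every t ∈ (a,b). Define the first-order differential operators D_k by (D_k g)(t) = (W_k(t)/W_{k−1}(t)) · d/dt [ (W_{k−1}(t)/W_k(t)) · g(t) ]. Then for every i = 1,…,n, the composition D_n D_{n−1} ⋯ D_2 D_1 applied to f_i is identically zero on (a,b); that is, f_1,…,f_n all satisfy the n-th order linear differential equation D_n D_{n−1} ⋯ D_1 y = 0. -/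

import Mathlib

/-- The Wronskian `W_k(t)` of the functions `f 1, …, f k` (the determinant of
the matrix of their derivatives of orders `0,…,k-1`); `W_0 ≡ 1`. -/
noncomputable def polyaW (f : ℕ → ℝ → ℝ) (k : ℕ) (t : ℝ) : ℝ :=
  Matrix.det (Matrix.of fun i j : Fin k => iteratedDeriv (i : ℕ) (f ((j : ℕ) + 1)) t)

/-- The first-order differential operator
`(D_k g)(t) = (W_k/W_{k-1})(t) · d/dt [ (W_{k-1}/W_k) · g ](t)`. -/
noncomputable def polyaD (f : ℕ → ℝ → ℝ) (k : ℕ) (g : ℝ → ℝ) : ℝ → ℝ :=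
  fun t => (polyaW f k t / polyaW f (k - 1) t) *
    deriv (fun s => (polyaW f (k - 1) s / polyaW f k s) * g s) t

/-- The composition `D_k D_{k-1} ⋯ D_1`. -/
noncomputable def polyaComp (f : ℕ → ℝ → ℝ) : ℕ → (ℝ → ℝ) → (ℝ → ℝ)
  | 0, g => g
  | k + 1, g => polyaD f (k + 1) (polyaComp f k g)

theorem polya_iter {a b : ℝ} {n : ℕ} {g : ℝ → ℝ} (hg : ContDiffOn ℝ n g (Set.Ioo a b)) :
    ∀ j m : ℕ, j + m ≤ n → ContDiffOn ℝ m (iteratedDeriv j g) (Set.Ioo a b) := by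
  intro j
  induction j with
  | zero =>
    intro m hm
    rw [iteratedDeriv_zero]
    exact hg.of_le (by exact_mod_cast (by omega : m ≤ n))
  | succ j ih =>
    intro m hm
    rw [iteratedDeriv_succ]
    exact (ih (m + 1) (by omega)).deriv_of_isOpen isOpen_Ioo (by push_cast; exact le_rfl)

theorem polya_W_contDiff {a b : ℝ} {n : ℕ} {f : ℕ → ℝ → ℝ}
    (hf : ∀ j, 1 ≤ j → j ≤ n → ContDiffOn ℝ n (f j) (Set.Ioo a b)) (k m : ℕ) (hk : k ≤ n)
    (hkm : k + m ≤ n + 1) : ContDiffOn ℝ m (polyaW f k) (Set.Ioo a b) := by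
  have : polyaW f k = fun t => ∑ σ : Equiv.Perm (Fin k), ((Equiv.Perm.sign σ : ℤ) : ℝ) *
      ∏ i : Fin k, iteratedDeriv ((σ i : Fin k) : ℕ) (f ((i : ℕ) + 1)) t := by
    funext t
    simp [polyaW, Matrix.det_apply']
  rw [this]
  refine ContDiffOn.sum fun σ _ => contDiffOn_const.mul ?_
  refine contDiffOn_prod fun i _ => ?_
  have := i.2
  have := (σ i).2
  exact polya_iter (hf _ (by omega) (by omega)) _ _ (by omega)

theorem polya_det (f : ℕ → ℝ → ℝ) (k : ℕ) (t : ℝ) (c : ℕ → ℝ) (hc : c k = 1)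
    (h0 : ∀ i, 1 ≤ i → i ≤ k →
      ∑ j ∈ Finset.range (k + 1), c j * iteratedDeriv j (f i) t = 0) :
    polyaW f (k + 1) t = polyaW f k t *
      ∑ j ∈ Finset.range (k + 1), c j * iteratedDeriv j (f (k + 1)) t := by
  set A : Matrix (Fin (k + 1)) (Fin (k + 1)) ℝ :=
    Matrix.of fun i j : Fin (k + 1) => iteratedDeriv (i : ℕ) (f ((j : ℕ) + 1)) t with hA
  have h1 := Matrix.det_updateRow_sum A (Fin.last k) (fun i => c i)
  have hrow : ∀ j : Fin (k + 1), (∑ i : Fin (k + 1), c i • A i) j =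
      ∑ i ∈ Finset.range (k + 1), c i * iteratedDeriv i (f ((j : ℕ) + 1)) t := by
    intro j
    rw [Finset.sum_apply, ← Fin.sum_univ_eq_sum_range
      (fun i => c i * iteratedDeriv i (f ((j : ℕ) + 1)) t)]
    rfl
  have h2 : polyaW f (k + 1) t = A.det := rfl
  rw [h2]
  simp only [Fin.val_last, hc, one_smul] at h1
  rw [← h1, Matrix.det_succ_row _ (Fin.last k), Finset.sum_eq_single (Fin.last k)]
  · rw [Matrix.updateRow_self, hrow]
    have : ((A.updateRow (Fin.last k) (∑ i : Fin (k + 1), c i • A i)).submatrix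
        (Fin.last k).succAbove (Fin.last k).succAbove).det = polyaW f k t := by
      unfold polyaW
      congr 1
      ext i j
      simp [Matrix.submatrix_apply, Matrix.updateRow_apply, hA]
    rw [this]
    have : (-1 : ℝ) ^ (((Fin.last k : Fin (k+1)) : ℕ) + ((Fin.last k : Fin (k+1)) : ℕ)) = 1 :=
      Even.neg_one_pow ⟨_, rfl⟩
    rw [this, Fin.val_last]
    ring
  · intro j _ hj
    have hlt : (j : ℕ) < k := by
      have := j.2
      have : (j : ℕ) ≠ k := fun h => hj (Fin.ext h)
      omega
    rw [Matrix.updateRow_self, hrow, h0 _ (by omega) (by omega)]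
    ring
  · simp

theorem polya_main (n : ℕ) (a b : ℝ) (f : ℕ → ℝ → ℝ)
    (hf : ∀ j, 1 ≤ j → j ≤ n → ContDiffOn ℝ n (f j) (Set.Ioo a b))
    (hW : ∀ k, k ≤ n → ∀ t ∈ Set.Ioo a b, polyaW f k t ≠ 0) (k : ℕ) (hk : k ≤ n) :
    (∃ c : ℕ → ℝ → ℝ, (∀ j, ContDiffOn ℝ (n - k : ℕ) (c j) (Set.Ioo a b)) ∧
      (c k = fun _ => 1) ∧ (∀ j, k < j → c j = fun _ => 0) ∧
      ∀ g, ContDiffOn ℝ n g (Set.Ioo a b) → ∀ t ∈ Set.Ioo a b,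
        polyaComp f k g t = ∑ j ∈ Finset.range (k + 1), c j t * iteratedDeriv j g t) ∧
    ∀ i, 1 ≤ i → i ≤ k → ∀ t ∈ Set.Ioo a b, polyaComp f k (f i) t = 0 := by
  induction k with
  | zero =>
    refine ⟨⟨fun j _ => if j = 0 then 1 else 0, fun j => contDiffOn_const, by simp, ?_, ?_⟩, ?_⟩
    · intro j hj
      simp [hj.ne']
    · intro g _ t _
      simp [polyaComp]
    · intro i h1 h2
      omega
  | succ k ih =>
    obtain ⟨⟨c, hcd, hck, hc0, hcg⟩, hz⟩ := ih (by omega)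
    have hWk := hW k (by omega)
    have hWk1 := hW (k + 1) hk
    have hq : ContDiffOn ℝ (n - k : ℕ) (fun s => polyaW f k s / polyaW f (k + 1) s)
        (Set.Ioo a b) :=
      (polya_W_contDiff hf k _ (by omega) (by omega)).div
        (polya_W_contDiff hf (k + 1) _ hk (by omega)) hWk1
    have hle : ((n - (k + 1) : ℕ) : WithTop ℕ∞) + 1 ≤ (n - k : ℕ) := by
      exact_mod_cast (by omega : n - (k + 1) + 1 ≤ n - k)
    have hne : ((n - k : ℕ) : WithTop ℕ∞) ≠ 0 := by
      exact_mod_cast (by omega : n - k ≠ 0)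
    set p : ℝ → ℝ := fun t => polyaW f (k + 1) t / polyaW f k t *
      deriv (fun s => polyaW f k s / polyaW f (k + 1) s) t with hp
    have hpd : ContDiffOn ℝ (n - (k + 1) : ℕ) p (Set.Ioo a b) :=
      ((polya_W_contDiff hf (k + 1) _ hk (by omega)).div
        (polya_W_contDiff hf k _ (by omega) (by omega)) hWk).mul
        (hq.deriv_of_isOpen isOpen_Ioo hle)
    have hcd' : ∀ j, ContDiffOn ℝ (n - (k + 1) : ℕ) (c j) (Set.Ioo a b) := fun j =>
      (hcd j).of_le (by exact_mod_cast (by omega : n - (k + 1) ≤ n - k))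
    refine ⟨⟨fun j t => (if j = 0 then 0 else c (j - 1) t) + (deriv (c j) t + p t * c j t),
      ?_, ?_, ?_, ?_⟩, ?_⟩
    · intro j
      refine ContDiffOn.add ?_ (((hcd j).deriv_of_isOpen isOpen_Ioo hle).add (hpd.mul (hcd' j)))
      by_cases hj : j = 0
      · simp only [hj, if_true]
        exact contDiffOn_const
      · simp only [hj, if_false]
        exact hcd' _
    · funext t
      simp [hck, hc0 (k + 1) (by omega)]
    · intro j hj
      funext t
      have : j ≠ 0 := by omega
      simp [this, hc0 j (by omega), hc0 (j - 1) (by omega)]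
    · intro g hg t ht
      have hL : HasDerivAt (fun s => ∑ j ∈ Finset.range (k + 1), c j s * iteratedDeriv j g s)
          (∑ j ∈ Finset.range (k + 1), (deriv (c j) t * iteratedDeriv j g t +
            c j t * iteratedDeriv (j + 1) g t)) t := by
        refine HasDerivAt.fun_sum fun j hj => ?_
        have hj' := Finset.mem_range.1 hj
        have e1 : DifferentiableAt ℝ (c j) t :=
          ((hcd j).differentiableOn hne).differentiableAt (isOpen_Ioo.mem_nhds ht)
        have e2 : DifferentiableAt ℝ (iteratedDeriv j g) t :=
          ((polya_iter hg j 1 (by omega)).differentiableOn (by simp)).differentiableAt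
            (isOpen_Ioo.mem_nhds ht)
        rw [iteratedDeriv_succ]
        exact e1.hasDerivAt.mul e2.hasDerivAt
      have hqd : HasDerivAt (fun s => polyaW f k s / polyaW f (k + 1) s)
          (deriv (fun s => polyaW f k s / polyaW f (k + 1) s) t) t :=
        ((hq.differentiableOn hne).differentiableAt (isOpen_Ioo.mem_nhds ht)).hasDerivAt
      have hev : (fun s => polyaW f k s / polyaW f (k + 1) s * polyaComp f k g s) =ᶠ[nhds t]
          (fun s => polyaW f k s / polyaW f (k + 1) s *
            ∑ j ∈ Finset.range (k + 1), c j s * iteratedDeriv j g s) := by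
        filter_upwards [isOpen_Ioo.mem_nhds ht] with s hs
        rw [hcg g hg s hs]
      have hD : polyaComp f (k + 1) g t = p t *
          ∑ j ∈ Finset.range (k + 1), c j t * iteratedDeriv j g t +
          ∑ j ∈ Finset.range (k + 1), (deriv (c j) t * iteratedDeriv j g t +
            c j t * iteratedDeriv (j + 1) g t) := by
        simp only [polyaComp, polyaD, Nat.add_sub_cancel]
        rw [hev.deriv_eq, (hqd.fun_mul hL).deriv, hp]
        have := hWk t ht
        have := hWk1 t ht
        field_simp
      rw [hD]
      simp only [add_mul, Finset.sum_add_distrib]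
      rw [Finset.sum_range_succ' (fun j => (if j = 0 then 0 else c (j - 1) t) * _),
        Finset.sum_range_succ (fun j => deriv (c j) t * _) (k + 1),
        Finset.sum_range_succ (fun j => p t * c j t * _) (k + 1)]
      simp only [hc0 (k + 1) (by omega), Finset.mul_sum, mul_assoc]
      simp
      ring
    · have key : ∀ i, (∃ C : ℝ, ∀ s ∈ Set.Ioo a b,
          polyaW f k s / polyaW f (k + 1) s * polyaComp f k (f i) s = C) →
          ∀ t ∈ Set.Ioo a b, polyaComp f (k + 1) (f i) t = 0 := by
        rintro i ⟨C, hC⟩ t ht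
        simp only [polyaComp, polyaD, Nat.add_sub_cancel]
        have : (fun s => polyaW f k s / polyaW f (k + 1) s * polyaComp f k (f i) s) =ᶠ[nhds t]
            (fun _ => C) := by
          filter_upwards [isOpen_Ioo.mem_nhds ht] with s hs
          exact hC s hs
        rw [this.deriv_eq]
        simp
      intro i h1 h2
      rcases Nat.lt_or_ge k i with h | h
      · obtain rfl : i = k + 1 := by omega
        refine key _ ⟨1, fun s hs => ?_⟩
        have := polya_det f k s (fun j => c j s) (by simp [hck]) (fun i h1 h2 => by
          rw [← hcg (f i) (hf i h1 (by omega)) s hs, hz i h1 h2 s hs])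
        rw [hcg _ (hf _ h1 hk) s hs]
        have e1 := hWk s hs
        have e2 := hWk1 s hs
        rw [div_mul_eq_mul_div, ← this, div_self e2]
      · exact key _ ⟨0, fun s hs => by rw [hz i h1 h s hs, mul_zero]⟩

/-- **Pólya's factorization.** If the Wronskians `W_1, …, W_n` of
`f 1, …, f n ∈ Cⁿ(a,b)` are nonvanishing on `(a,b)`, then each `f i`
(`1 ≤ i ≤ n`) is annihilated by the composition `D_n D_{n-1} ⋯ D_1`. -/
theorem stmt19 (n : ℕ) (a b : ℝ) (f : ℕ → ℝ → ℝ)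
    (hf : ∀ j, 1 ≤ j → j ≤ n → ContDiffOn ℝ n (f j) (Set.Ioo a b))
    (hW : ∀ k, 1 ≤ k → k ≤ n → ∀ t ∈ Set.Ioo a b, polyaW f k t ≠ 0) :
    ∀ i, 1 ≤ i → i ≤ n → ∀ t ∈ Set.Ioo a b, polyaComp f n (f i) t = 0 := by
  refine (polya_main n a b f hf (fun k hk t ht => ?_) n le_rfl).2
  rcases Nat.eq_zero_or_pos k with rfl | h
  · simp [polyaW]
  · exact hW k h hk t ht
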